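/- Let L be a bounded pairwise loss function with L ≤ c for some constant c ∈ (0,∞), H the RKHS of a bounded measurable kernel on X, λ > 0, and define R^reg(P) := inf_{f∈H} ( R_{L,P}(f) + λ‖f‖_H² ). Then for every Borel probability measure P on X×Y, every contaminating Borel probability measure P̄ on X×Y, and every ε ∈ (0,1), the contaminated measure P_ε := (1−ε)P + εP̄ satisfies |R^reg(P_ε) − R^reg(P)| ≤ 2c·d_TV(P̄, P)·ε·(1+ε); in particular the maximum bias over contamination neighborhoods is bounded by 2cε(1+ε), uniformly over P and P̄. -/

import Mathlib

open MeasureTheory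
open scoped RealInnerProductSpace

/-- The regularized risk functional `R^reg(P) = inf_{f ∈ H} (R_{L,P}(f) + λ ‖f‖²_H)`, where the
function induced by `f ∈ H` is `x ↦ ⟪f, Φ x⟫`. -/
noncomputable def regRisk {X : Type*} [MeasurableSpace X] {Y : Set ℝ}
    {H : Type*} [NormedAddCommGroup H] [InnerProductSpace ℝ H]
    (L : X → Y → X → Y → ℝ → ℝ → ℝ) (Φ : X → H) (l : ℝ)
    (P : Measure (X × Y)) : ℝ :=
  ⨅ f : H, ((∫ z : (X × Y) × (X × Y),
      L z.1.1 z.1.2 z.2.1 z.2.2 ⟪f, Φ z.1.1⟫ ⟪f, Φ z.2.1⟫ ∂(P.prod P)) + l * ‖f‖ ^ 2)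

/-- The total variation distance `d_TV(P,Q) = sup_{A measurable} |P(A) - Q(A)|`. -/
noncomputable def distTV {Z : Type*} [MeasurableSpace Z] (P Q : Measure Z) : ℝ :=
  ⨆ (A : Set Z) (_ : MeasurableSet A), |(P A).toReal - (Q A).toReal|

/-!
The risk `R_{L,P}(f)` is the integral against `P ⊗ P` of a function with values in `[0, c]`, so by
the layer cake formula it moves by at most `c d_TV(P ⊗ P, Q ⊗ Q) ≤ 2 c d_TV(P, Q)` when `P` is
replaced by `Q`. This is uniform in `f` and hence passes to the infimum defining `R^reg`. As
`P_ε - P = ε (P̄ - P)`, we have `d_TV(P_ε, P) = ε d_TV(P̄, P)`, so the bias is in fact at most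
`2 c d_TV(P̄, P) ε`.
-/

section TotalVariation

variable {Z W : Type*} [MeasurableSpace Z] [MeasurableSpace W]

lemma distTV_le {P Q : Measure Z} {r : ℝ} (hr : 0 ≤ r)
    (h : ∀ A, MeasurableSet A → |P.real A - Q.real A| ≤ r) : distTV P Q ≤ r :=
  Real.iSup_le (fun A => Real.iSup_le (h A) hr) hr

lemma distTV_nonneg (P Q : Measure Z) : 0 ≤ distTV P Q :=
  Real.iSup_nonneg fun _ => Real.iSup_nonneg fun _ => abs_nonneg _

lemma abs_measureReal_sub_le_max (P Q : Measure Z) [IsFiniteMeasure P] [IsFiniteMeasure Q]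
    (A : Set Z) : |P.real A - Q.real A| ≤ max (P.real Set.univ) (Q.real Set.univ) :=
  abs_sub_le_of_nonneg_of_le
    measureReal_nonneg ((measureReal_mono (Set.subset_univ A)).trans (le_max_left _ _))
    measureReal_nonneg ((measureReal_mono (Set.subset_univ A)).trans (le_max_right _ _))

lemma distTV_le_one (P Q : Measure Z) [IsProbabilityMeasure P] [IsProbabilityMeasure Q] :
    distTV P Q ≤ 1 :=
  distTV_le zero_le_one fun A _ => by simpa using abs_measureReal_sub_le_max P Q A

lemma abs_measureReal_sub_le_distTV (P Q : Measure Z) [IsFiniteMeasure P] [IsFiniteMeasure Q]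
    {A : Set Z} (hA : MeasurableSet A) : |P.real A - Q.real A| ≤ distTV P Q := by
  have hbdd : BddAbove (Set.range fun B : Set Z =>
      ⨆ _ : MeasurableSet B, |(P B).toReal - (Q B).toReal|) := by
    refine ⟨max (P.real Set.univ) (Q.real Set.univ), ?_⟩
    rintro _ ⟨B, rfl⟩
    exact Real.iSup_le (fun _ => abs_measureReal_sub_le_max P Q B)
      (measureReal_nonneg.trans (le_max_left _ _))
  simpa [hA, distTV, measureReal_def] using le_ciSup hbdd A

lemma distTV_triangle (P Q R : Measure Z) [IsFiniteMeasure P] [IsFiniteMeasure Q]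
    [IsFiniteMeasure R] : distTV P R ≤ distTV P Q + distTV Q R :=
  distTV_le (add_nonneg (distTV_nonneg P Q) (distTV_nonneg Q R)) fun _ hA =>
    (abs_sub_le _ _ _).trans <| add_le_add
      (abs_measureReal_sub_le_distTV P Q hA) (abs_measureReal_sub_le_distTV Q R hA)

lemma distTV_map_le (P Q : Measure Z) [IsFiniteMeasure P] [IsFiniteMeasure Q] {f : Z → W}
    (hf : Measurable f) : distTV (P.map f) (Q.map f) ≤ distTV P Q :=
  distTV_le (distTV_nonneg P Q) fun A hA => by
    rw [map_measureReal_apply hf hA, map_measureReal_apply hf hA]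
    exact abs_measureReal_sub_le_distTV P Q (hf hA)

lemma abs_integral_sub_integral_le_mul_distTV_of_nonneg (P Q : Measure Z) [IsFiniteMeasure P]
    [IsFiniteMeasure Q] {h : Z → ℝ} (hm : Measurable h) {c : ℝ} (hc : 0 ≤ c)
    (hh : ∀ z, h z ∈ Set.Icc 0 c) : |∫ z, h z ∂P - ∫ z, h z ∂Q| ≤ c * distTV P Q := by
  have layer_cake (μ : Measure Z) [IsFiniteMeasure μ] :
      ∫ z, h z ∂μ = ∫ t in Set.Ioc 0 c, μ.real {z | t ≤ h z} :=
    (Integrable.of_mem_Icc 0 c hm.aemeasurable (.of_forall hh)).integral_eq_integral_Ioc_meas_le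
      (.of_forall fun z => (hh z).1) (.of_forall fun z => (hh z).2)
  have superlevel_integrable (μ : Measure Z) [IsFiniteMeasure μ] :
      IntegrableOn (fun t => μ.real {z | t ≤ h z}) (Set.Ioc 0 c) := by
    have hanti : Antitone fun t => μ.real {z | t ≤ h z} := fun s t hst =>
      measureReal_mono fun _ => hst.trans
    exact hanti.intervalIntegrable.1
  rw [layer_cake P, layer_cake Q,
    ← integral_sub (superlevel_integrable P) (superlevel_integrable Q), ← Real.norm_eq_abs]
  calc _ ≤ distTV P Q * volume.real (Set.Ioc 0 c) :=
        norm_setIntegral_le_of_norm_le_const measure_Ioc_lt_top fun t _ =>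
          abs_measureReal_sub_le_distTV P Q (hm measurableSet_Ici)
    _ = c * distTV P Q := by rw [Real.volume_real_Ioc_of_le hc, sub_zero, mul_comm]

lemma abs_integral_sub_integral_le_mul_distTV (P Q : Measure Z) [IsProbabilityMeasure P]
    [IsProbabilityMeasure Q] {h : Z → ℝ} (hm : Measurable h) {a b : ℝ}
    (hh : ∀ z, h z ∈ Set.Icc a b) :
    |∫ z, h z ∂P - ∫ z, h z ∂Q| ≤ (b - a) * distTV P Q := by
  have integral_shift (μ : Measure Z) [IsProbabilityMeasure μ] :
      ∫ z, (h z - a) ∂μ = ∫ z, h z ∂μ - a := by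
    rw [integral_sub (.of_mem_Icc a b hm.aemeasurable (.of_forall hh)) (integrable_const a)]
    simp
  obtain ⟨z₀⟩ := nonempty_of_isProbabilityMeasure P
  have hab : a ≤ b := (hh z₀).1.trans (hh z₀).2
  simpa [integral_shift] using
    abs_integral_sub_integral_le_mul_distTV_of_nonneg P Q (hm.sub_const a) (sub_nonneg.2 hab)
      fun z => ⟨sub_nonneg.2 (hh z).1, sub_le_sub_right (hh z).2 a⟩

lemma measureReal_prod_eq_integral (P : Measure Z) (R : Measure W) [IsFiniteMeasure R]
    {A : Set (Z × W)} (hA : MeasurableSet A) :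
    (P.prod R).real A = ∫ z, R.real (Prod.mk z ⁻¹' A) ∂P := by
  rw [measureReal_def, Measure.prod_apply hA]
  exact (integral_toReal (measurable_measure_prodMk_left hA).aemeasurable
    (.of_forall fun _ => measure_lt_top R _)).symm

lemma distTV_prod_right_le (P Q : Measure Z) (R : Measure W) [IsFiniteMeasure P]
    [IsFiniteMeasure Q] [IsFiniteMeasure R] :
    distTV (P.prod R) (Q.prod R) ≤ R.real Set.univ * distTV P Q :=
  distTV_le (mul_nonneg measureReal_nonneg (distTV_nonneg P Q)) fun A hA => by
    rw [measureReal_prod_eq_integral P R hA, measureReal_prod_eq_integral Q R hA]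
    exact abs_integral_sub_integral_le_mul_distTV_of_nonneg P Q
      (measurable_measure_prodMk_left hA).ennreal_toReal measureReal_nonneg
      fun z => ⟨measureReal_nonneg, measureReal_mono (Set.subset_univ _)⟩

lemma distTV_prod_left_le (R : Measure W) (P Q : Measure Z) [IsFiniteMeasure P]
    [IsFiniteMeasure Q] [IsFiniteMeasure R] :
    distTV (R.prod P) (R.prod Q) ≤ R.real Set.univ * distTV P Q := by
  rw [← Measure.prod_swap, ← Measure.prod_swap (μ := Q)]
  exact (distTV_map_le _ _ measurable_swap).trans (distTV_prod_right_le P Q R)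

lemma distTV_prod_le (P Q : Measure Z) (P' Q' : Measure W) [IsProbabilityMeasure P]
    [IsProbabilityMeasure Q] [IsProbabilityMeasure P'] [IsProbabilityMeasure Q'] :
    distTV (P.prod P') (Q.prod Q') ≤ distTV P Q + distTV P' Q' :=
  (distTV_triangle _ (Q.prod P') _).trans <| add_le_add
    (by simpa using distTV_prod_right_le P Q P') (by simpa using distTV_prod_left_le Q P' Q')

end TotalVariation

section Contamination

variable {Z : Type*} [MeasurableSpace Z] {ε : ℝ}

lemma isProbabilityMeasure_contamination (P Q : Measure Z) [IsProbabilityMeasure P]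
    [IsProbabilityMeasure Q] (hε₀ : 0 ≤ ε) (hε₁ : ε ≤ 1) :
    IsProbabilityMeasure (ENNReal.ofReal (1 - ε) • P + ENNReal.ofReal ε • Q) where
  measure_univ := by simp [← ENNReal.ofReal_add (sub_nonneg.2 hε₁) hε₀]

lemma distTV_contamination (P Q : Measure Z) [IsFiniteMeasure P] [IsFiniteMeasure Q]
    (hε₀ : 0 ≤ ε) (hε₁ : ε ≤ 1) :
    distTV (ENNReal.ofReal (1 - ε) • P + ENNReal.ofReal ε • Q) P = ε * distTV Q P := by
  have hdiff (A : Set Z) :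
      |((ENNReal.ofReal (1 - ε) • P + ENNReal.ofReal ε • Q) A).toReal - (P A).toReal|
        = ε * |(Q A).toReal - (P A).toReal| := by
    simp only [Measure.add_apply, Measure.smul_apply, smul_eq_mul]
    rw [ENNReal.toReal_add (by finiteness) (by finiteness), ENNReal.toReal_mul,
      ENNReal.toReal_mul, ENNReal.toReal_ofReal (sub_nonneg.2 hε₁), ENNReal.toReal_ofReal hε₀]
    calc _ = |ε * ((Q A).toReal - (P A).toReal)| := by ring_nf
      _ = ε * |(Q A).toReal - (P A).toReal| := by rw [abs_mul, abs_of_nonneg hε₀]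
  simp only [distTV, hdiff, Real.mul_iSup_of_nonneg hε₀]

end Contamination

lemma abs_ciInf_sub_ciInf_le {ι : Type*} [Nonempty ι] {F G : ι → ℝ}
    (hF : BddBelow (Set.range F)) (hG : BddBelow (Set.range G)) {δ : ℝ}
    (h : ∀ i, |F i - G i| ≤ δ) : |(⨅ i, F i) - ⨅ i, G i| ≤ δ := by
  rw [abs_sub_le_iff, sub_le_comm, sub_le_comm (a := ⨅ i, G i)]
  exact ⟨le_ciInf fun i => by linarith [ciInf_le hF i, (abs_sub_le_iff.1 (h i)).1],
    le_ciInf fun i => by linarith [ciInf_le hG i, (abs_sub_le_iff.1 (h i)).2]⟩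

section PairwiseRisk

variable {X Y : Type*} [MeasurableSpace X] [MeasurableSpace Y]

/-- The pairwise risk `R_{L,P}(f)`, through which the data distribution enters `regRisk`. It is
defined for an arbitrary predictor `f : X → ℝ`, not only for the functions of an RKHS. -/
noncomputable def pairwiseRisk (L : X → Y → X → Y → ℝ → ℝ → ℝ) (P : Measure (X × Y))
    (f : X → ℝ) : ℝ :=
  ∫ z : (X × Y) × (X × Y), L z.1.1 z.1.2 z.2.1 z.2.2 (f z.1.1) (f z.2.1) ∂(P.prod P)

variable {L : X → Y → X → Y → ℝ → ℝ → ℝ} {f : X → ℝ} {a b : ℝ}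

lemma measurable_pairwiseLoss_comp
    (hL : Measurable fun p : (X × Y) × (X × Y) × ℝ × ℝ =>
      L p.1.1 p.1.2 p.2.1.1 p.2.1.2 p.2.2.1 p.2.2.2)
    (hf : Measurable f) :
    Measurable fun z : (X × Y) × (X × Y) => L z.1.1 z.1.2 z.2.1 z.2.2 (f z.1.1) (f z.2.1) := by
  have hargs : Measurable fun z : (X × Y) × (X × Y) => (z.1, z.2, f z.1.1, f z.2.1) := by fun_prop
  exact hL.comp hargs

lemma le_pairwiseRisk
    (hL : Measurable fun p : (X × Y) × (X × Y) × ℝ × ℝ =>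
      L p.1.1 p.1.2 p.2.1.1 p.2.1.2 p.2.2.1 p.2.2.2)
    (hLab : ∀ x y x' y' t t', L x y x' y' t t' ∈ Set.Icc a b) (hf : Measurable f)
    (P : Measure (X × Y)) [IsProbabilityMeasure P] : a ≤ pairwiseRisk L P f := by
  have hint : Integrable (fun z : (X × Y) × (X × Y) =>
      L z.1.1 z.1.2 z.2.1 z.2.2 (f z.1.1) (f z.2.1)) (P.prod P) :=
    .of_mem_Icc a b (measurable_pairwiseLoss_comp hL hf).aemeasurable
      (.of_forall fun _ => hLab _ _ _ _ _ _)
  simpa [pairwiseRisk] using integral_mono (integrable_const a) hint fun _ => (hLab _ _ _ _ _ _).1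

lemma abs_pairwiseRisk_sub_pairwiseRisk_le
    (hL : Measurable fun p : (X × Y) × (X × Y) × ℝ × ℝ =>
      L p.1.1 p.1.2 p.2.1.1 p.2.1.2 p.2.2.1 p.2.2.2)
    (hLab : ∀ x y x' y' t t', L x y x' y' t t' ∈ Set.Icc a b) (hf : Measurable f)
    (P Q : Measure (X × Y)) [IsProbabilityMeasure P] [IsProbabilityMeasure Q] :
    |pairwiseRisk L P f - pairwiseRisk L Q f| ≤ 2 * (b - a) * distTV P Q := by
  obtain ⟨z⟩ := nonempty_of_isProbabilityMeasure P
  have hab : 0 ≤ b - a :=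
    sub_nonneg.2 (Set.nonempty_Icc.1 ⟨_, hLab z.1 z.2 z.1 z.2 0 0⟩)
  calc |pairwiseRisk L P f - pairwiseRisk L Q f|
      ≤ (b - a) * distTV (P.prod P) (Q.prod Q) :=
        abs_integral_sub_integral_le_mul_distTV _ _ (measurable_pairwiseLoss_comp hL hf)
          fun _ => hLab _ _ _ _ _ _
    _ ≤ (b - a) * (distTV P Q + distTV P Q) :=
        mul_le_mul_of_nonneg_left (distTV_prod_le P Q P Q) hab
    _ = 2 * (b - a) * distTV P Q := by ring

end PairwiseRisk

section RegularizedRisk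

variable {X : Type*} [MeasurableSpace X] {Y : Set ℝ}
  {H : Type*} [NormedAddCommGroup H] [InnerProductSpace ℝ H]
  {L : X → Y → X → Y → ℝ → ℝ → ℝ} {Φ : X → H} {a b l : ℝ}

lemma regRisk_eq_iInf_pairwiseRisk (P : Measure (X × Y)) :
    regRisk L Φ l P = ⨅ f : H, (pairwiseRisk L P (fun x => ⟪f, Φ x⟫) + l * ‖f‖ ^ 2) :=
  rfl

theorem abs_regRisk_sub_regRisk_le
    (hL : Measurable fun p : (X × Y) × (X × Y) × ℝ × ℝ =>
      L p.1.1 p.1.2 p.2.1.1 p.2.1.2 p.2.2.1 p.2.2.2)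
    (hLab : ∀ x y x' y' t t', L x y x' y' t t' ∈ Set.Icc a b)
    (hΦ : ∀ f : H, Measurable fun x => ⟪f, Φ x⟫) (hl : 0 ≤ l)
    (P Q : Measure (X × Y)) [IsProbabilityMeasure P] [IsProbabilityMeasure Q] :
    |regRisk L Φ l P - regRisk L Φ l Q| ≤ 2 * (b - a) * distTV P Q := by
  have hbdd (μ : Measure (X × Y)) [IsProbabilityMeasure μ] : BddBelow (Set.range fun f : H =>
      pairwiseRisk L μ (fun x => ⟪f, Φ x⟫) + l * ‖f‖ ^ 2) := by
    refine ⟨a, ?_⟩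
    rintro _ ⟨f, rfl⟩
    exact le_add_of_le_of_nonneg (le_pairwiseRisk hL hLab (hΦ f) μ) (by positivity)
  rw [regRisk_eq_iInf_pairwiseRisk, regRisk_eq_iInf_pairwiseRisk]
  refine abs_ciInf_sub_ciInf_le (hbdd P) (hbdd Q) fun f => ?_
  rw [add_sub_add_right_eq_sub]
  exact abs_pairwiseRisk_sub_pairwiseRisk_le hL hLab (hΦ f) P Q

theorem rpl_bias_bound_contamination_general
    (hL : Measurable fun p : (X × Y) × (X × Y) × ℝ × ℝ =>
      L p.1.1 p.1.2 p.2.1.1 p.2.1.2 p.2.2.1 p.2.2.2)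
    (hLab : ∀ x y x' y' t t', L x y x' y' t t' ∈ Set.Icc a b)
    (hΦ : ∀ f : H, Measurable fun x => ⟪f, Φ x⟫) (hl : 0 ≤ l)
    (P Pbar : Measure (X × Y)) [IsProbabilityMeasure P] [IsProbabilityMeasure Pbar]
    {ε : ℝ} (hε₀ : 0 ≤ ε) (hε₁ : ε ≤ 1) :
    |regRisk L Φ l (ENNReal.ofReal (1 - ε) • P + ENNReal.ofReal ε • Pbar) - regRisk L Φ l P|
      ≤ 2 * (b - a) * distTV Pbar P * ε := by
  have := isProbabilityMeasure_contamination P Pbar hε₀ hε₁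
  calc _ ≤ 2 * (b - a) * distTV (ENNReal.ofReal (1 - ε) • P + ENNReal.ofReal ε • Pbar) P :=
        abs_regRisk_sub_regRisk_le hL hLab hΦ hl _ P
    _ = 2 * (b - a) * distTV Pbar P * ε := by
        rw [distTV_contamination P Pbar hε₀ hε₁]; ring

end RegularizedRisk

/-- **Bounds for the bias over contamination neighborhoods.** If the pairwise loss `L` is
bounded by `c` and `H` is the RKHS of a bounded measurable kernel, then for every probability
measure `P`, every contaminating probability measure `P̄`, and every `ε ∈ (0,1)`, the
contaminated measure `P_ε = (1-ε)P + εP̄` satisfies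
`|R^reg(P_ε) - R^reg(P)| ≤ 2c d_TV(P̄, P) ε (1+ε) ≤ 2c ε (1+ε)`. -/
theorem rpl_bias_bound_contamination
    {X : Type*} [MeasurableSpace X] {Y : Set ℝ} (hY : IsClosed Y)
    (L : X → Y → X → Y → ℝ → ℝ → ℝ)
    (hL_nonneg : ∀ x y x' y' t t', 0 ≤ L x y x' y' t t')
    (hL_meas : Measurable fun p : (X × Y) × (X × Y) × ℝ × ℝ =>
      L p.1.1 p.1.2 p.2.1.1 p.2.1.2 p.2.2.1 p.2.2.2)
    (c : ℝ) (hc : 0 < c)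
    (hLbd : ∀ x y x' y' t t', L x y x' y' t t' ≤ c)
    {H : Type*} [NormedAddCommGroup H] [InnerProductSpace ℝ H] [CompleteSpace H]
    (Φ : X → H) (κ : ℝ) (hκ : ∀ x, ‖Φ x‖ ≤ κ)
    (hΦmeas : ∀ f : H, Measurable fun x => ⟪f, Φ x⟫)
    (l : ℝ) (hl : 0 < l)
    (P Pbar : Measure (X × Y)) (hP : IsProbabilityMeasure P)
    (hPbar : IsProbabilityMeasure Pbar)
    (ε : ℝ) (hε0 : 0 < ε) (hε1 : ε < 1) :
    |regRisk L Φ l (ENNReal.ofReal (1 - ε) • P + ENNReal.ofReal ε • Pbar)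
        - regRisk L Φ l P|
      ≤ 2 * c * distTV Pbar P * (ε * (1 + ε)) ∧
    |regRisk L Φ l (ENNReal.ofReal (1 - ε) • P + ENNReal.ofReal ε • Pbar)
        - regRisk L Φ l P|
      ≤ 2 * c * (ε * (1 + ε)) := by
  have hdist := distTV_nonneg Pbar P
  have hbias : |regRisk L Φ l (ENNReal.ofReal (1 - ε) • P + ENNReal.ofReal ε • Pbar)
      - regRisk L Φ l P| ≤ 2 * c * distTV Pbar P * ε := by
    simpa only [sub_zero] using rpl_bias_bound_contamination_general hL_meas
      (fun _ _ _ _ _ _ => ⟨hL_nonneg _ _ _ _ _ _, hLbd _ _ _ _ _ _⟩) hΦmeas hl.le P Pbar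
      hε0.le hε1.le
  have hε : ε ≤ ε * (1 + ε) := le_mul_of_one_le_right hε0.le (by linarith)
  have hbias' := hbias.trans (mul_le_mul_of_nonneg_left hε (by positivity))
  refine ⟨hbias', hbias'.trans (mul_le_mul_of_nonneg_right ?_ (by positivity))⟩
  exact mul_le_of_le_one_right (by positivity) (distTV_le_one Pbar P)
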